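/- Let n ≥ 4 and let (X_e)_{e ∈ E(K_n)} be independent real-valued random variables with P(X_e = X_{e'}) = 0 for all distinct edges e, e' (a non-colliding product measure), such that the topological support of the law of each X_e is a connected subset of ℝ. If there exist two distinct edges e and e' of K_n sharing a common endpoint such that X_e and X_{e'} have the same distribution, then the induced minimum-spanning-tree distribution on spanning trees of K_n is not uniform: there exist spanning trees T, T' of K_n such that the probability that T is the unique minimum-weight spanning tree for the weights (X_e) differs from the corresponding probability for T'. -/

import Mathlib

open MeasureTheory SimpleGraph
open scoped Classical

noncomputable section

namespace RST

variable {V : Type*}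

/-- The graph on `V` whose edge set is the finset `T`. -/
def spanGraph (T : Finset (Sym2 V)) : SimpleGraph V :=
  SimpleGraph.fromEdgeSet ↑T

/-- `T` is (the edge set of) a spanning tree of `G`. -/
def IsSpanningTree (G : SimpleGraph V) (T : Finset (Sym2 V)) : Prop :=
  ↑T ⊆ G.edgeSet ∧ (spanGraph T).Connected ∧ (spanGraph T).IsAcyclic

/-- Total weight `∑_{e ∈ T} w e` of the tree `T`. -/
def treeWeight (G : SimpleGraph V) [Fintype V] (w : G.edgeSet → ℝ) (T : Finset (Sym2 V)) : ℝ :=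
  ∑ e : G.edgeSet, if (e : Sym2 V) ∈ T then w e else 0

/-- The event that `T` is the unique minimum-weight spanning tree of `G`. -/
def mstEvent (G : SimpleGraph V) [Fintype V] (T : Finset (Sym2 V)) : Set (G.edgeSet → ℝ) :=
  {w | IsSpanningTree G T ∧ ∀ T' : Finset (Sym2 V), IsSpanningTree G T' → T' ≠ T →
    treeWeight G w T < treeWeight G w T'}

/-- The topological support of a measure on `ℝ`: the set of points all of whose open
neighborhoods have positive measure (equivalently, the smallest closed set of full
measure). -/
def measSupport (μ : Measure ℝ) : Set ℝ :=
  {x | ∀ U : Set ℝ, IsOpen U → x ∈ U → 0 < μ U}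


/-- Extension by zero of an edge weight to all pairs. -/
def wext (w : (⊤ : SimpleGraph V).edgeSet → ℝ) (s : Sym2 V) : ℝ :=
  if h : s ∈ (⊤ : SimpleGraph V).edgeSet then w ⟨s, h⟩ else 0

lemma wext_coe (w : (⊤ : SimpleGraph V).edgeSet → ℝ) (s : (⊤ : SimpleGraph V).edgeSet) :
    wext w s = w s := by
  simp only [wext, s.2, dif_pos]

lemma treeWeight_eq [Fintype V] (w : (⊤ : SimpleGraph V).edgeSet → ℝ) (T : Finset (Sym2 V)) :
    treeWeight ⊤ w T = ∑ s ∈ T, wext w s := by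
  unfold treeWeight
  have h1 : ∀ e : (⊤ : SimpleGraph V).edgeSet, (if (e : Sym2 V) ∈ T then w e else 0)
      = (fun s : Sym2 V => if s ∈ T then wext w s else 0) e := by
    intro e
    simp only [wext_coe]
  rw [Finset.sum_congr rfl (fun e _ => h1 e)]
  rw [← Finset.sum_subtype (Finset.univ.filter (fun s => s ∈ (⊤ : SimpleGraph V).edgeSet))
    (by simp) (fun s : Sym2 V => if s ∈ T then wext w s else 0)]
  rw [Finset.sum_filter]
  rw [← Finset.sum_filter_add_sum_filter_not Finset.univ (fun s => s ∈ T)]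
  rw [Finset.sum_filter, Finset.sum_filter, ← Finset.sum_add_distrib]
  rw [← Finset.sum_filter_add_sum_filter_not T (fun s => s ∈ (⊤ : SimpleGraph V).edgeSet)]
  have h2 : ∑ x ∈ T.filter (fun s => ¬ s ∈ (⊤ : SimpleGraph V).edgeSet), wext w x = 0 := by
    apply Finset.sum_eq_zero
    intro x hx
    simp only [Finset.mem_filter] at hx
    simp only [wext, hx.2, dif_neg, not_false_eq_true]
  rw [h2, add_zero]
  have h3 : T.filter (fun s => s ∈ (⊤ : SimpleGraph V).edgeSet)
    = Finset.univ.filter (fun s => s ∈ T ∧ s ∈ (⊤ : SimpleGraph V).edgeSet) := by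
    ext s; simp
  rw [h3, Finset.sum_filter]
  apply Finset.sum_congr rfl
  intro s _
  by_cases h : s ∈ T <;> simp [h]

lemma spanGraph_edgeSet (T : Finset (Sym2 V)) (hT : ∀ s ∈ T, ¬ s.IsDiag) :
    (spanGraph T).edgeSet = ↑T := by
  unfold spanGraph
  rw [edgeSet_fromEdgeSet]
  ext s
  simp only [Set.mem_sdiff, Finset.mem_coe, Sym2.mem_diagSet]
  exact ⟨fun h => h.1, fun h => ⟨h, hT s h⟩⟩

lemma spanGraph_adj {T : Finset (Sym2 V)} {a b : V} :
    (spanGraph T).Adj a b ↔ s(a, b) ∈ T ∧ a ≠ b := by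
  simp [spanGraph]

lemma IsSpanningTree.notDiag {T : Finset (Sym2 V)} (h : IsSpanningTree ⊤ T) :
    ∀ s ∈ T, ¬ s.IsDiag := by
  intro s hs
  have := h.1 hs
  simpa using this

lemma IsSpanningTree.card_eq [Fintype V] {T : Finset (Sym2 V)} (h : IsSpanningTree ⊤ T) :
    T.card + 1 = Fintype.card V := by
  have h1 : (spanGraph T).IsTree := ⟨h.2.1, h.2.2⟩
  have h2 := (isTree_iff_connected_and_card.mp h1).2
  rw [spanGraph_edgeSet T h.notDiag] at h2
  simpa using h2

lemma isSpanningTree_of [Fintype V] {T : Finset (Sym2 V)} (hT : ∀ s ∈ T, ¬ s.IsDiag)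
    (hcard : T.card + 1 ≤ Fintype.card V) (hc : (spanGraph T).Connected) :
    IsSpanningTree ⊤ T := by
  refine ⟨?_, hc, ?_⟩
  · intro s hs
    simpa using hT s hs
  · have h2 := hc.card_vert_le_card_edgeSet_add_one
    refine (isTree_iff_connected_and_card.mpr ⟨hc, ?_⟩).isAcyclic
    rw [spanGraph_edgeSet T hT] at h2 ⊢
    simp at h2 ⊢
    omega

/-- Exchange: swapping `g ∈ T` for `f ∉ T`. -/
lemma exchange_tree [Fintype V] {T : Finset (Sym2 V)} (h : IsSpanningTree ⊤ T) {a b : V}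
    {f : Sym2 V} (hg : s(a, b) ∈ T) (hf : ¬ f.IsDiag)
    (hr : (spanGraph (insert f (T.erase s(a, b)))).Reachable a b) :
    IsSpanningTree ⊤ (insert f (T.erase s(a, b))) := by
  apply isSpanningTree_of
  · intro s hs
    rcases Finset.mem_insert.mp hs with rfl | hs
    · exact hf
    · exact h.notDiag s (Finset.mem_of_mem_erase hs)
  · have := h.card_eq
    have h1 := Finset.card_insert_le f (T.erase s(a, b))
    have h2 := Finset.card_erase_add_one hg
    omega
  · have hn := h.2.1.nonempty
    refine ⟨?_⟩
    have key : ∀ u v, (spanGraph T).Adj u v →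
        (spanGraph (insert f (T.erase s(a, b)))).Reachable u v := by
      intro u v huv
      rw [spanGraph_adj] at huv
      by_cases he : s(u, v) = s(a, b)
      · rcases Sym2.eq_iff.mp he with ⟨rfl, rfl⟩ | ⟨rfl, rfl⟩
        · exact hr
        · exact hr.symm
      · apply Adj.reachable
        rw [spanGraph_adj]
        exact ⟨Finset.mem_insert_of_mem (Finset.mem_erase.mpr ⟨he, huv.1⟩), huv.2⟩
    intro u v
    obtain ⟨p⟩ := h.2.1.preconnected u v
    induction p with
    | nil => exact Reachable.refl _
    | cons hadj _ ih => exact (key _ _ hadj).trans ih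

lemma exchange_weight (W : Sym2 V → ℝ) (T : Finset (Sym2 V)) (f g : Sym2 V) (hg : g ∈ T)
    (hf : f ∉ T) : ∑ s ∈ insert f (T.erase g), W s = ∑ s ∈ T, W s - W g + W f := by
  rw [Finset.sum_insert (fun h => hf (Finset.mem_of_mem_erase h)), ← Finset.add_sum_erase T W hg]
  ring

lemma exchange_lt [Fintype V] {T : Finset (Sym2 V)} {a b : V}
    {w : (⊤ : SimpleGraph V).edgeSet → ℝ} (hw : w ∈ mstEvent ⊤ T)
    {f : Sym2 V} (hg : s(a, b) ∈ T) (hfT : f ∉ T) (hf : ¬ f.IsDiag)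
    (hr : (spanGraph (insert f (T.erase s(a, b)))).Reachable a b) :
    wext w s(a, b) < wext w f := by
  have h1 := hw.2 _ (exchange_tree hw.1 hg hf hr)
    (fun h => hfT (by rw [← h]; exact Finset.mem_insert_self _ _))
  rw [treeWeight_eq, treeWeight_eq, exchange_weight _ _ _ _ hg hfT] at h1
  linarith

/-- Star at `z`. -/
def star [Fintype V] (z : V) : Finset (Sym2 V) :=
  (Finset.univ.erase z).image (fun u => s(z, u))

/-- Star at `z` with `x` attached to `y` instead of `z`. -/
def star' [Fintype V] (z x y : V) : Finset (Sym2 V) :=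
  insert s(x, y) ((star z).erase s(z, x))

lemma mem_star [Fintype V] {z u v : V} :
    s(u, v) ∈ star z ↔ u ≠ v ∧ (u = z ∨ v = z) := by
  simp only [star, Finset.mem_image, Finset.mem_erase, Finset.mem_univ, and_true, Sym2.eq_iff]
  constructor
  · rintro ⟨a, ha, ⟨rfl, rfl⟩ | ⟨rfl, rfl⟩⟩
    · exact ⟨ha.symm, Or.inl rfl⟩
    · exact ⟨ha, Or.inr rfl⟩
  · rintro ⟨h, rfl | rfl⟩
    · exact ⟨v, h.symm, Or.inl ⟨rfl, rfl⟩⟩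
    · exact ⟨u, h, Or.inr ⟨rfl, rfl⟩⟩

lemma star_isSpanningTree [Fintype V] (z : V) : IsSpanningTree ⊤ (star z) := by
  apply isSpanningTree_of
  · intro s
    induction s with | h u v =>
    intro h
    rw [mem_star] at h
    simpa using h.1
  · have h1 : (star z).card ≤ (Finset.univ.erase z).card := Finset.card_image_le
    have h2 := Finset.card_erase_add_one (Finset.mem_univ z)
    rw [Finset.card_univ] at h2
    omega
  · have : Nonempty V := ⟨z⟩
    refine ⟨?_⟩
    have key : ∀ u, (spanGraph (star z)).Reachable u z := by
      intro u
      by_cases h : u = z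
      · rw [h]
      · apply Adj.reachable
        rw [spanGraph_adj, mem_star]
        exact ⟨⟨h, Or.inr rfl⟩, h⟩
    intro u v
    exact (key u).trans (key v).symm

lemma mem_star' [Fintype V] {z x y u v : V} :
    s(u, v) ∈ star' z x y ↔ s(u, v) = s(x, y) ∨
      (s(u, v) ≠ s(z, x) ∧ u ≠ v ∧ (u = z ∨ v = z)) := by
  simp only [star', Finset.mem_insert, Finset.mem_erase, mem_star]

lemma adj2 {T : Finset (Sym2 V)} {a b : V} (h : s(a, b) ∈ T) (hab : a ≠ b) :
    (spanGraph T).Reachable a b := Adj.reachable (spanGraph_adj.mpr ⟨h, hab⟩)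

lemma star'_isSpanningTree [Fintype V] {z x y : V} (hxy : x ≠ y) (hxz : x ≠ z) (hyz : y ≠ z) :
    IsSpanningTree ⊤ (star' z x y) := by
  apply exchange_tree (star_isSpanningTree z)
  · rw [mem_star]; exact ⟨hxz.symm, Or.inl rfl⟩
  · simpa using hxy
  · apply Reachable.trans (v := y)
    · apply adj2 _ hyz.symm
      simp only [Finset.mem_insert, Finset.mem_erase, mem_star, Sym2.eq_iff]
      grind
    · apply adj2 _ hxy.symm
      simp only [Finset.mem_insert, Finset.mem_erase, mem_star, Sym2.eq_iff]
      grind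

/-- The star at `z` is the unique MST as soon as each non-star edge is heavier than the two star
edges in its fundamental cycle. -/
lemma star_mst [Fintype V] (z : V) (w : (⊤ : SimpleGraph V).edgeSet → ℝ)
    (h : ∀ u v, u ≠ v → u ≠ z → v ≠ z → wext w s(z, u) < wext w s(u, v)) :
    w ∈ mstEvent ⊤ (star z) := by
  refine ⟨star_isSpanningTree z, ?_⟩
  intro T hT hne
  rw [treeWeight_eq, treeWeight_eq]
  have hpar : ∀ u, ∃ v, u ≠ z → (spanGraph T).Adj u v ∧
      (spanGraph T).dist v z < (spanGraph T).dist u z := by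
    intro u
    by_cases hu : u = z
    · exact ⟨u, fun h => absurd hu h⟩
    obtain ⟨p, hp⟩ := (hT.2.1.preconnected u z).exists_walk_length_eq_dist
    cases p with
    | nil => exact absurd rfl hu
    | cons hadj q =>
      refine ⟨_, fun _ => ⟨hadj, ?_⟩⟩
      have := dist_le q
      rw [Walk.length_cons] at hp
      omega
  choose π hπ using hpar
  have hinj : Set.InjOn (fun u => s(u, π u)) (Finset.univ.erase z : Finset V) := by
    intro u hu v hv huv
    have hu' : u ≠ z := by simpa using hu
    have hv' : v ≠ z := by simpa using hv
    rcases Sym2.eq_iff.mp huv with ⟨h1, _⟩ | ⟨h1, h2⟩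
    · exact h1
    · have := (hπ u hu').2
      have h3 := (hπ v hv').2
      rw [← h1] at h3
      rw [h2] at this
      omega
  have himg : (Finset.univ.erase z).image (fun u => s(u, π u)) = T := by
    apply Finset.eq_of_subset_of_card_le
    · intro s hs
      obtain ⟨u, hu, rfl⟩ := Finset.mem_image.mp hs
      exact (spanGraph_adj.mp (hπ u (by simpa using hu)).1).1
    · rw [Finset.card_image_of_injOn hinj]
      have h2 := Finset.card_erase_add_one (Finset.mem_univ z)
      rw [Finset.card_univ] at h2
      have := hT.card_eq
      omega
  have hstar : ∑ s ∈ star z, wext w s = ∑ u ∈ Finset.univ.erase z, wext w s(z, u) := by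
    unfold star
    rw [Finset.sum_image]
    intro u _ v _ huv
    rcases Sym2.eq_iff.mp huv with ⟨_, h2⟩ | ⟨h1, h2⟩
    · exact h2
    · exact h2.trans h1
  have hle : ∀ u, u ≠ z → wext w s(z, u) ≤ wext w s(u, π u) := by
    intro u hu
    by_cases hz : π u = z
    · rw [hz, Sym2.eq_swap]
    · exact (h u (π u) (hπ u hu).1.ne hu hz).le
  rw [hstar, ← himg, Finset.sum_image hinj]
  apply Finset.sum_lt_sum
  · intro u hu
    exact hle u (by simpa using hu)
  · by_contra hcon
    push Not at hcon
    apply hne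
    rw [← himg]
    unfold star
    apply Finset.image_congr
    intro u hu
    have hu' : u ≠ z := by simpa using hu
    have hz : π u = z := by
      by_contra hz
      exact absurd (h u (π u) (hπ u hu').1.ne hu' hz) (not_lt.mpr (hcon u (by simpa using hu)))
    simp only [hz]
    exact Sym2.eq_swap

lemma spanGraph_erase (T : Finset (Sym2 V)) (e : Sym2 V) :
    spanGraph (T.erase e) = (spanGraph T).deleteEdges {e} := by
  ext u v
  rw [deleteEdges_adj, spanGraph_adj, spanGraph_adj, Finset.mem_erase, Set.mem_singleton_iff]
  tauto

lemma reach_or [Fintype V] {T : Finset (Sym2 V)} (hT : IsSpanningTree ⊤ T) (a b v : V) :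
    (spanGraph (T.erase s(a, b))).Reachable v a ∨ (spanGraph (T.erase s(a, b))).Reachable v b := by
  obtain ⟨p⟩ := hT.2.1.preconnected v b
  induction p with
  | nil => exact Or.inr (Reachable.refl _)
  | @cons u v w hadj q ih =>
    by_cases he : s(u, v) = s(a, w)
    · rcases Sym2.eq_iff.mp he with ⟨rfl, rfl⟩ | ⟨rfl, rfl⟩
      · exact Or.inl (Reachable.refl _)
      · exact Or.inr (Reachable.refl _)
    · have h1 : (spanGraph (T.erase s(a, w))).Reachable u v :=
        adj2 (Finset.mem_erase.mpr ⟨he, (spanGraph_adj.mp hadj).1⟩) hadj.ne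
      exact ih.imp h1.trans h1.trans

lemma sym_exchange [Fintype V] {T T' : Finset (Sym2 V)} (hT : IsSpanningTree ⊤ T)
    (hT' : IsSpanningTree ⊤ T') (hne : T ≠ T') :
    ∃ e f, e ∈ T ∧ e ∉ T' ∧ f ∈ T' ∧ f ∉ T ∧ IsSpanningTree ⊤ (insert f (T.erase e)) ∧
      IsSpanningTree ⊤ (insert e (T'.erase f)) := by
  have h1 : ∃ e, e ∈ T ∧ e ∉ T' := by
    by_contra hcon
    push Not at hcon
    apply hne
    apply Finset.eq_of_subset_of_card_le hcon
    have := hT.card_eq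
    have := hT'.card_eq
    omega
  obtain ⟨e, heT, heT'⟩ := h1
  induction e with | h a b =>
  have hab : a ≠ b := by simpa using hT.notDiag _ heT
  have hbr : ¬ (spanGraph (T.erase s(a, b))).Reachable a b := by
    rw [spanGraph_erase]
    have h := isAcyclic_iff_forall_isBridge.mp hT.2.2 (e := s(a, b))
      (by rw [spanGraph_edgeSet T hT.notDiag]; exact heT)
    exact isBridge_iff.mp h
  obtain ⟨p, hp⟩ := (hT'.2.1.preconnected b a).exists_isPath
  obtain ⟨d, hd, hd1, hd2⟩ := p.exists_boundary_dart
    {v | (spanGraph (T.erase s(a, b))).Reachable v b} (Reachable.refl _) hbr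
  have hdadj := d.adj
  have hfp : s(d.fst, d.snd) ∈ p.edges := by
    exact List.mem_map_of_mem (f := Dart.edge) hd
  generalize d.fst = c at *
  generalize d.snd = k at *
  simp only [Set.mem_ofPred_eq] at hd1 hd2
  have hfT' := (spanGraph_adj.mp hdadj).1
  have hck := hdadj.ne
  have hfe : s(c, k) ≠ s(a, b) := fun h => heT' (h ▸ hfT')
  have hfT : s(c, k) ∉ T := by
    intro h
    apply hd2
    have : (spanGraph (T.erase s(a, b))).Reachable c k :=
      adj2 (Finset.mem_erase.mpr ⟨hfe, h⟩) hck
    exact this.symm.trans hd1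
  refine ⟨s(a, b), s(c, k), heT, heT', hfT', hfT, ?_, ?_⟩
  · apply exchange_tree hT heT (by simpa using hck)
    have hle : spanGraph (T.erase s(a, b)) ≤ spanGraph (insert s(c, k) (T.erase s(a, b))) := by
      intro u v huv
      rw [spanGraph_adj] at huv ⊢
      exact ⟨Finset.mem_insert_of_mem huv.1, huv.2⟩
    have hka := (reach_or hT a b k).resolve_right hd2
    have hkc : (spanGraph (insert s(c, k) (T.erase s(a, b)))).Reachable c k :=
      adj2 (Finset.mem_insert_self _ _) hck
    exact ((hka.mono hle).symm.trans hkc.symm).trans (hd1.mono hle)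
  · apply exchange_tree hT' hfT' (by simpa using hab)
    have hle : spanGraph T' ≤ spanGraph (insert s(a, b) T') := by
      intro u v huv
      rw [spanGraph_adj] at huv ⊢
      exact ⟨Finset.mem_insert_of_mem huv.1, huv.2⟩
    have hadj : (spanGraph (insert s(a, b) T')).Adj a b :=
      spanGraph_adj.mpr ⟨Finset.mem_insert_self _ _, hab⟩
    have hcyc : (Walk.cons hadj (p.mapLe hle)).IsCycle := by
      rw [Walk.cons_isCycle_iff]
      refine ⟨hp.mapLe hle, ?_⟩
      rw [Walk.edges_mapLe_eq_edges]
      intro h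
      have h3 := Walk.edges_subset_edgeSet p h
      rw [spanGraph_edgeSet T' hT'.notDiag] at h3
      exact heT' h3
    have hmem : s(c, k) ∈ (Walk.cons hadj (p.mapLe hle)).edges := by
      rw [Walk.edges_cons, Walk.edges_mapLe_eq_edges]
      exact List.mem_cons_of_mem _ hfp
    have hnb : ¬ (spanGraph (insert s(a, b) T')).IsBridge s(c, k) := by
      intro h
      exact (isBridge_iff_forall_cycle_notMem (Walk.edges_subset_edgeSet _ hmem)).mp h _ hcyc hmem
    rw [isBridge_iff, not_not, ← spanGraph_erase] at hnb
    rwa [Finset.erase_insert_of_ne hfe.symm] at hnb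

lemma exists_mst [Fintype V] [Nonempty V] (w : (⊤ : SimpleGraph V).edgeSet → ℝ)
    (hw : Function.Injective w) : ∃ T, w ∈ mstEvent ⊤ T := by
  obtain ⟨z⟩ := ‹Nonempty V›
  obtain ⟨T, hT, hmin⟩ := Finset.exists_min_image
    (Finset.univ.filter (fun T : Finset (Sym2 V) => IsSpanningTree ⊤ T))
    (fun T => ∑ s ∈ T, wext w s) ⟨star z, by simpa using star_isSpanningTree z⟩
  simp only [Finset.mem_filter, Finset.mem_univ, true_and] at hT hmin
  refine ⟨T, hT, ?_⟩
  intro T' hT' hne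
  rw [treeWeight_eq, treeWeight_eq]
  refine lt_of_le_of_ne (hmin T' hT') ?_
  intro heq
  obtain ⟨e, f, he, he', hf, hf', h1, h2⟩ := sym_exchange hT hT' hne.symm
  have h3 := hmin _ h1
  have h4 := hmin _ h2
  rw [exchange_weight _ _ _ _ he hf'] at h3
  rw [exchange_weight _ _ _ _ hf he', ← heq] at h4
  have h5 : wext w e = wext w f := by linarith
  have h6 : (⟨e, hT.1 he⟩ : (⊤ : SimpleGraph V).edgeSet) = ⟨f, hT'.1 hf⟩ := by
    apply hw
    have h8 := wext_coe w ⟨e, hT.1 he⟩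
    have h9 := wext_coe w ⟨f, hT'.1 hf⟩
    exact h8.symm.trans (h5.trans h9)
  have h7 : e = f := congrArg Subtype.val h6
  exact hf' (h7 ▸ he)

lemma exists_lt_tree [Fintype V] (f g : (⊤ : SimpleGraph V).edgeSet) (hfg : f ≠ g) :
    ∃ T, IsSpanningTree (⊤ : SimpleGraph V) T ∧ mstEvent ⊤ T ⊆ {w | w g < w f} := by
  suffices h : ∃ T, IsSpanningTree (⊤ : SimpleGraph V) T ∧
      ∀ w ∈ mstEvent ⊤ T, wext w g < wext w f by
    obtain ⟨T, hT, h⟩ := h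
    refine ⟨T, hT, fun w hw => ?_⟩
    have := h w hw
    rwa [wext_coe, wext_coe] at this
  obtain ⟨f, hf⟩ := f
  obtain ⟨g, hg⟩ := g
  simp only [ne_eq, Subtype.mk.injEq] at hfg
  -- adjacent case
  have key1 : ∀ a b c : V, a ≠ b → a ≠ c → b ≠ c → ∃ T, IsSpanningTree (⊤ : SimpleGraph V) T ∧
      ∀ w ∈ mstEvent ⊤ T, wext w s(a, b) < wext w s(a, c) := by
    intro a b c hab hac hbc
    refine ⟨star b, star_isSpanningTree b, fun w hw => ?_⟩
    apply exchange_lt hw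
    · rw [mem_star]; grind
    · rw [mem_star]; grind
    · simpa using hac
    · apply Reachable.trans (v := c)
      · apply adj2 _ hac
        simp
      · apply adj2 _ hbc.symm
        simp only [Finset.mem_insert, Finset.mem_erase, mem_star, Sym2.eq_iff]
        grind
  induction f with | h c d =>
  induction g with | h a b =>
  have hcd : c ≠ d := by simpa using hf
  have hab : a ≠ b := by simpa using hg
  show ∃ T, IsSpanningTree (⊤ : SimpleGraph V) T ∧
      ∀ w ∈ mstEvent ⊤ T, wext w s(a, b) < wext w s(c, d)
  clear hf hg
  by_cases h1 : a = c
  · subst h1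
    exact key1 a b d hab hcd (by rintro rfl; exact hfg rfl)
  by_cases h2 : a = d
  · subst h2
    rw [Sym2.eq_swap (a := c)]
    refine key1 a b c hab hcd.symm ?_
    rintro rfl
    exact hfg Sym2.eq_swap
  by_cases h3 : b = c
  · subst h3
    rw [Sym2.eq_swap (a := a)]
    exact key1 b a d hab.symm hcd h2
  by_cases h4 : b = d
  · subst h4
    rw [Sym2.eq_swap (a := a), Sym2.eq_swap (a := c)]
    exact key1 b a c hab.symm hcd.symm h1
  refine ⟨star' a d b, star'_isSpanningTree (Ne.symm h4) (Ne.symm h2) hab.symm, fun w hw => ?_⟩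
  apply exchange_lt hw
  · rw [mem_star']; grind
  · rw [mem_star']; grind
  · simpa using hcd
  · apply Reachable.trans (v := c)
    · apply adj2 _ h1
      simp only [Finset.mem_insert, Finset.mem_erase, mem_star', Sym2.eq_iff]
      grind
    apply Reachable.trans (v := d)
    · apply adj2 _ hcd
      simp
    · apply adj2 _ (Ne.symm h4)
      simp only [Finset.mem_insert, Finset.mem_erase, mem_star', Sym2.eq_iff]
      grind

lemma star'_cond [Fintype V] {z x y : V} (hxy : x ≠ y) (hxz : x ≠ z) (hyz : y ≠ z)
    {w : (⊤ : SimpleGraph V).edgeSet → ℝ} (hw : w ∈ mstEvent ⊤ (star' z x y)) :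
    wext w s(x, y) < wext w s(x, z) ∧ wext w s(z, y) < wext w s(x, z) ∧
    (∀ u, u ≠ x → u ≠ y → u ≠ z → wext w s(x, y) < wext w s(x, u) ∧
      wext w s(z, u) < wext w s(x, u) ∧ wext w s(z, y) < wext w s(x, u)) ∧
    (∀ u v, u ≠ v → u ≠ x → v ≠ x → u ≠ z → v ≠ z → wext w s(z, u) < wext w s(u, v)) := by
  refine ⟨?_, ?_, ?_, ?_⟩
  · apply exchange_lt hw
    · rw [mem_star']; grind
    · rw [mem_star']; grind
    · simpa using hxz
    · apply Reachable.trans (v := z)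
      · apply adj2 _ hxz
        simp
      · apply adj2 _ hyz.symm
        simp only [Finset.mem_insert, Finset.mem_erase, mem_star', Sym2.eq_iff]
        grind
  · apply exchange_lt hw
    · rw [mem_star']; grind
    · rw [mem_star']; grind
    · simpa using hxz
    · apply Reachable.trans (v := x)
      · apply adj2 _ hxz.symm
        simp [Sym2.eq_swap]
      · apply adj2 _ hxy
        simp only [Finset.mem_insert, Finset.mem_erase, mem_star', Sym2.eq_iff]
        grind
  · intro u hux huy huz
    refine ⟨?_, ?_, ?_⟩
    · apply exchange_lt hw
      · rw [mem_star']; grind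
      · rw [mem_star']; grind
      · simpa using hux.symm
      · apply Reachable.trans (v := u)
        · apply adj2 _ hux.symm
          simp
        apply Reachable.trans (v := z)
        · apply adj2 _ huz
          simp only [Finset.mem_insert, Finset.mem_erase, mem_star', Sym2.eq_iff]
          grind
        · apply adj2 _ hyz.symm
          simp only [Finset.mem_insert, Finset.mem_erase, mem_star', Sym2.eq_iff]
          grind
    · apply exchange_lt hw
      · rw [mem_star']; grind
      · rw [mem_star']; grind
      · simpa using hux.symm
      · apply Reachable.trans (v := y)
        · apply adj2 _ hyz.symm
          simp only [Finset.mem_insert, Finset.mem_erase, mem_star', Sym2.eq_iff]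
          grind
        apply Reachable.trans (v := x)
        · apply adj2 _ hxy.symm
          simp only [Finset.mem_insert, Finset.mem_erase, mem_star', Sym2.eq_iff]
          grind
        · apply adj2 _ hux.symm
          simp
    · apply exchange_lt hw
      · rw [mem_star']; grind
      · rw [mem_star']; grind
      · simpa using hux.symm
      · apply Reachable.trans (v := u)
        · apply adj2 _ huz.symm
          simp only [Finset.mem_insert, Finset.mem_erase, mem_star', Sym2.eq_iff]
          grind
        apply Reachable.trans (v := x)
        · apply adj2 _ hux
          simp [Sym2.eq_swap]
        · apply adj2 _ hxy
          simp only [Finset.mem_insert, Finset.mem_erase, mem_star', Sym2.eq_iff]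
          grind
  · intro u v huv hux hvx huz hvz
    apply exchange_lt hw
    · rw [mem_star']; grind
    · rw [mem_star']; grind
    · simpa using huv
    · apply Reachable.trans (v := v)
      · apply adj2 _ hvz.symm
        simp only [Finset.mem_insert, Finset.mem_erase, mem_star', Sym2.eq_iff]
        grind
      · apply adj2 _ huv.symm
        simp [Sym2.eq_swap]

lemma interval_lemma {ι : Type*} [Fintype ι] [Nonempty ι] (I : ι → Set ℝ)
    (hI : ∀ i, IsPreconnected (I i)) (hne : ∀ i, (I i).Nonempty)
    (h : ∀ f g, f ≠ g → ∃ x ∈ I f, ∃ y ∈ I g, y < x) :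
    ∃ c δ : ℝ, 0 < δ ∧ ∃ d, c ∈ I d ∧ ∀ e, e ≠ d → Set.Icc (c - δ) (c + δ) ⊆ I e := by
  have h1 : ∀ f g, ∃ x y, x ∈ I f ∧ y ∈ I g ∧ y ≤ x ∧ (f ≠ g → y < x) := by
    intro f g
    by_cases hfg : f = g
    · subst hfg
      obtain ⟨x, hx⟩ := hne f
      exact ⟨x, x, hx, hx, le_refl _, fun h => absurd rfl h⟩
    · obtain ⟨x, hx, y, hy, hxy⟩ := h f g hfg
      exact ⟨x, y, hx, hy, hxy.le, fun _ => hxy⟩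
  choose X Y hX hY hle hlt using h1
  have hlo : ∀ g, ∃ l ∈ I g, ∀ f, l ≤ Y f g := by
    intro g
    obtain ⟨f, hf⟩ := Finite.exists_min (fun f => Y f g)
    exact ⟨Y f g, hY f g, hf⟩
  have hhi : ∀ f, ∃ l ∈ I f, ∀ g, X f g ≤ l := by
    intro f
    obtain ⟨g, hg⟩ := Finite.exists_max (fun g => X f g)
    exact ⟨X f g, hX f g, hg⟩
  choose lo hloI hlo using hlo
  choose hi hhiI hhi using hhi
  have hlh : ∀ f g, f ≠ g → lo g < hi f := fun f g hfg =>
    (hlo g f).trans_lt ((hlt f g hfg).trans_le (hhi f g))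
  have hlh' : ∀ f, lo f ≤ hi f := fun f => (hlo f f).trans ((hle f f).trans (hhi f f))
  have hsub : ∀ e, Set.Icc (lo e) (hi e) ⊆ I e := fun e =>
    (hI e).ordConnected.out (hloI e) (hhiI e)
  obtain ⟨d, hd⟩ := Finite.exists_max lo
  obtain ⟨d', hd'⟩ := Finite.exists_min hi
  by_cases hc : lo d < hi d'
  · have hall : ∀ e, Set.Icc (lo d) (hi d') ⊆ I e := fun e =>
      (Set.Icc_subset_Icc (hd e) (hd' e)).trans (hsub e)
    refine ⟨(lo d + hi d') / 2, (hi d' - lo d) / 2, by linarith, d, ?_, ?_⟩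
    · apply hall
      constructor <;> linarith
    · intro e _ t ht
      apply hall
      constructor <;> linarith [ht.1, ht.2]
  · have hdd : d = d' := by
      by_contra hne
      exact hc (hlh d' d (Ne.symm hne))
    subst hdd
    have heq : lo d = hi d := le_antisymm (hlh' d) (not_lt.mp hc)
    obtain ⟨e0, he0⟩ := Finite.exists_min
      (fun e => if e = d then (1 : ℝ) else min (hi d - lo e) (hi e - hi d))
    refine ⟨hi d, if e0 = d then (1 : ℝ) else min (hi d - lo e0) (hi e0 - hi d), ?_, d, hhiI d, ?_⟩
    · split_ifs with h0
      · norm_num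
      · have h2 := hlh d e0 (Ne.symm h0)
        have h3 := hlh e0 d h0
        apply lt_min <;> linarith
    · intro e he t ht
      have h4 := he0 e
      simp only [he, if_false] at h4
      have h5 := h4.trans (min_le_left _ _)
      have h6 := h4.trans (min_le_right _ _)
      apply hsub
      constructor <;> linarith [ht.1, ht.2]

lemma measSupport_eq (μ : Measure ℝ) : measSupport μ = μ.support := by
  rw [Measure.support_eq_forall_isOpen]
  ext x
  simp only [measSupport, Set.mem_ofPred_eq]
  exact ⟨fun h U hx hU => h U hU hx, fun h U hU hx => h U hx hU⟩

/-- Levels of the edges in the witness ordering. -/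
def lev (x y z u : V) (s : Sym2 V) : ℝ :=
  if s = s(z, y) then 2 else if z ∈ s then 0 else if s = s(x, u) then 1 else 3

lemma main_aux [Fintype V] (ν : (⊤ : SimpleGraph V).edgeSet → Measure ℝ)
    (hprob : ∀ e, IsProbabilityMeasure (ν e))
    (hnc : ∀ e e' : (⊤ : SimpleGraph V).edgeSet, e ≠ e' →
      Measure.pi ν {w | w e = w e'} = 0)
    (hconn : ∀ e, IsPreconnected (measSupport (ν e)))
    (e e' : (⊤ : SimpleGraph V).edgeSet) (x y z u : V) (he : (e : Sym2 V) = s(x, y))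
    (he' : (e' : Sym2 V) = s(x, z)) (hxy : x ≠ y) (hxz : x ≠ z) (hyz : y ≠ z)
    (hux : u ≠ x) (huy : u ≠ y) (huz : u ≠ z) (hsame : ν e = ν e') :
    ∃ T T' : Finset (Sym2 V),
      IsSpanningTree (⊤ : SimpleGraph V) T ∧ IsSpanningTree (⊤ : SimpleGraph V) T' ∧
      (Measure.pi ν (mstEvent (⊤ : SimpleGraph V) T)).toReal ≠
        (Measure.pi ν (mstEvent (⊤ : SimpleGraph V) T')).toReal := by
  by_contra hcon
  push Not at hcon
  have hall : ∀ T T' : Finset (Sym2 V), IsSpanningTree (⊤ : SimpleGraph V) T →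
      IsSpanningTree (⊤ : SimpleGraph V) T' →
      Measure.pi ν (mstEvent (⊤ : SimpleGraph V) T) =
        Measure.pi ν (mstEvent (⊤ : SimpleGraph V) T') := by
    intro T T' hT hT'
    exact (ENNReal.toReal_eq_toReal_iff' (measure_ne_top _ _) (measure_ne_top _ _)).mp
      (hcon T T' hT hT')
  have hVne : Nonempty V := ⟨x⟩
  -- every tree has positive probability
  have hpos : ∀ T, IsSpanningTree (⊤ : SimpleGraph V) T →
      0 < Measure.pi ν (mstEvent (⊤ : SimpleGraph V) T) := by
    intro T hT
    by_contra h0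
    have h0 : Measure.pi ν (mstEvent (⊤ : SimpleGraph V) T) = 0 := by simpa using h0
    have hz : ∀ T', Measure.pi ν (mstEvent (⊤ : SimpleGraph V) T') = 0 := by
      intro T'
      by_cases hT' : IsSpanningTree (⊤ : SimpleGraph V) T'
      · rw [hall T' T hT' hT, h0]
      · have : mstEvent (⊤ : SimpleGraph V) T' = ∅ := by
          ext w
          simp only [mstEvent, hT', false_and, Set.mem_ofPred_eq, Set.mem_empty_iff_false]
        rw [this, measure_empty]
    have hU : Measure.pi ν (⋃ T', mstEvent (⊤ : SimpleGraph V) T') = 0 :=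
      measure_iUnion_null hz
    have hN : Measure.pi ν (⋃ p : {p : (⊤ : SimpleGraph V).edgeSet × (⊤ : SimpleGraph V).edgeSet //
        p.1 ≠ p.2}, {w : (⊤ : SimpleGraph V).edgeSet → ℝ | w p.1.1 = w p.1.2}) = 0 :=
      measure_iUnion_null (fun p => hnc _ _ p.2)
    have hcov : (Set.univ : Set ((⊤ : SimpleGraph V).edgeSet → ℝ)) ⊆
        (⋃ T', mstEvent (⊤ : SimpleGraph V) T') ∪
        (⋃ p : {p : (⊤ : SimpleGraph V).edgeSet × (⊤ : SimpleGraph V).edgeSet //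
        p.1 ≠ p.2}, {w : (⊤ : SimpleGraph V).edgeSet → ℝ | w p.1.1 = w p.1.2}) := by
      intro w _
      by_cases hw : Function.Injective w
      · left
        exact Set.mem_iUnion.mpr (exists_mst w hw)
      · right
        simp only [Function.Injective] at hw
        push Not at hw
        obtain ⟨a, b, hab, hne⟩ := hw
        exact Set.mem_iUnion.mpr ⟨⟨(a, b), hne⟩, hab⟩
    have h1 := measure_mono (μ := Measure.pi ν) hcov
    have h2 := (measure_union_null hU hN)
    rw [h2, measure_univ] at h1
    exact absurd h1 (by simp)
  -- supports
  have hsupp : ∀ i, ∀ᵐ w ∂(Measure.pi ν), w i ∈ measSupport (ν i) := by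
    intro i
    have h1 : ∀ᵐ t ∂(ν i), t ∈ measSupport (ν i) := by
      rw [measSupport_eq]
      exact Measure.support_mem_ae
    exact (measurePreserving_eval ν i).quasiMeasurePreserving.ae h1
  have hnes : ∀ i, (measSupport (ν i)).Nonempty := by
    intro i
    rw [measSupport_eq]
    exact Measure.nonempty_support (IsProbabilityMeasure.ne_zero _)
  have hlt : ∀ f g, f ≠ g → ∃ a ∈ measSupport (ν f), ∃ b ∈ measSupport (ν g), b < a := by
    intro f g hfg
    by_contra hno
    push Not at hno
    obtain ⟨T, hT, hsub⟩ := exists_lt_tree f g hfg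
    have h1 := (hpos T hT).trans_le (measure_mono hsub)
    have h2 : ∀ᵐ w ∂(Measure.pi ν), ¬ (w g < w f) := by
      filter_upwards [hsupp f, hsupp g] with w hf hg
      exact not_lt.mpr (hno _ hf _ hg)
    have h3 : Measure.pi ν {w | w g < w f} = 0 := by
      rw [ae_iff] at h2
      simpa using h2
    rw [h3] at h1
    exact lt_irrefl _ h1
  have : Nonempty (⊤ : SimpleGraph V).edgeSet := ⟨e⟩
  obtain ⟨c, δ, hδ, d, hd, hicc⟩ := interval_lemma (fun i => measSupport (ν i)) hconn hnes hlt
  -- the box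
  let p : (⊤ : SimpleGraph V).edgeSet → ℝ := fun i => c + δ * (lev x y z u i - lev x y z u d) / 3
  have hlev : ∀ s : Sym2 V, 0 ≤ lev x y z u s ∧ lev x y z u s ≤ 3 := by
    intro s
    unfold lev
    split_ifs <;> norm_num
  have hp : ∀ i, p i ∈ measSupport (ν i) := by
    intro i
    by_cases hi : i = d
    · have : p i = c := by simp [p, hi]
      rw [this, hi]
      exact hd
    · apply hicc i hi
      have h1 := hlev i
      have h2 := hlev d
      have e1 : δ * (lev x y z u i - lev x y z u d) ≤ δ * 3 :=
        mul_le_mul_of_nonneg_left (by linarith) hδ.le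
      have e2 : δ * (-3) ≤ δ * (lev x y z u i - lev x y z u d) :=
        mul_le_mul_of_nonneg_left (by linarith) hδ.le
      simp only [p]
      constructor <;> linarith
  let box : Set ((⊤ : SimpleGraph V).edgeSet → ℝ) :=
    Set.univ.pi (fun i => Set.Ioo (p i - δ / 6) (p i + δ / 6))
  have hboxm : MeasurableSet box := MeasurableSet.univ_pi (fun i => measurableSet_Ioo)
  have hboxpos : 0 < Measure.pi ν box := by
    rw [Measure.pi_pi]
    apply pos_iff_ne_zero.mpr
    rw [Finset.prod_ne_zero_iff]
    intro i _
    exact (hp i _ isOpen_Ioo ⟨by linarith, by linarith⟩).ne'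
  have hbox : ∀ w ∈ box, ∀ a b a' b' : V, a ≠ b → a' ≠ b' →
      lev x y z u s(a, b) + 1 ≤ lev x y z u s(a', b') → wext w s(a, b) < wext w s(a', b') := by
    intro w hw a b a' b' hab hab' hl
    have m1 : s(a, b) ∈ (⊤ : SimpleGraph V).edgeSet := by simpa using hab
    have m2 : s(a', b') ∈ (⊤ : SimpleGraph V).edgeSet := by simpa using hab'
    have h1 := (hw ⟨_, m1⟩ (Set.mem_univ _)).2
    have h2 := (hw ⟨_, m2⟩ (Set.mem_univ _)).1
    have h3 := wext_coe w ⟨_, m1⟩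
    have h4 := wext_coe w ⟨_, m2⟩
    simp only [p] at h1 h2 h3 h4
    rw [h3, h4]
    have e1 : δ * (lev x y z u s(a, b) + 1) ≤ δ * lev x y z u s(a', b') :=
      mul_le_mul_of_nonneg_left hl hδ.le
    nlinarith
  have hbox1 : box ⊆ mstEvent ⊤ (star z) := by
    intro w hw
    apply star_mst
    intro a b hab haz hbz
    apply hbox w hw _ _ _ _ haz.symm hab
    simp only [lev, Sym2.eq_iff, Sym2.mem_iff]
    split_ifs <;> first | (norm_num; done) | (exfalso; clear hbox hicc hlt hp hlev hcon hall hpos hsupp hnes hprob hnc hconn; grind)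
  have hbox2 : ∀ w ∈ box, wext w s(x, u) < wext w s(z, y) := by
    intro w hw
    apply hbox w hw _ _ _ _ hux.symm hyz.symm
    simp only [lev, Sym2.eq_iff, Sym2.mem_iff]
    split_ifs <;> first | (norm_num; done) | (exfalso; clear hbox hicc hlt hp hlev hcon hall hpos hsupp hnes hprob hnc hconn; grind)
  -- the swap
  let σ := Equiv.swap e e'
  have hνσ : (fun i => ν (σ i)) = ν := by
    funext i
    simp only [σ, Equiv.swap_apply_def]
    split_ifs with h1 h2
    · rw [h1, hsame]
    · rw [h2, hsame]
    · rfl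
  let Φ := MeasurableEquiv.piCongrLeft (fun _ : (⊤ : SimpleGraph V).edgeSet => ℝ) σ
  have hΦ : MeasurePreserving Φ (Measure.pi ν) (Measure.pi ν) := by
    have := measurePreserving_piCongrLeft ν σ
    rwa [hνσ] at this
  have hΦa : ∀ w i, Φ w (σ i) = w i := by
    intro w i
    exact Equiv.piCongrLeft_apply_apply (fun _ => ℝ) σ w i
  have hpre : Measure.pi ν (Φ ⁻¹' mstEvent ⊤ (star' z x y)) =
      Measure.pi ν (mstEvent ⊤ (star' z x y)) := hΦ.measure_preimage_equiv _
  have hw1 : ∀ w, wext w s(x, y) = wext (Φ w) s(x, z) := by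
    intro w
    rw [← he, ← he', wext_coe, wext_coe, ← hΦa w e]
    simp [σ]
  have hw2 : ∀ w, wext w s(x, z) = wext (Φ w) s(x, y) := by
    intro w
    rw [← he, ← he', wext_coe, wext_coe, ← hΦa w e']
    simp [σ]
  have hw3 : ∀ w, ∀ s : Sym2 V, s ≠ s(x, y) → s ≠ s(x, z) → wext w s = wext (Φ w) s := by
    intro w s h1 h2
    unfold wext
    split_ifs with h
    · rw [← hΦa w ⟨s, h⟩]
      refine congrArg (Φ w) ?_
      apply Equiv.swap_apply_of_ne_of_ne
      · intro h3
        exact h1 (by rw [← he, ← h3])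
      · intro h3
        exact h2 (by rw [← he', ← h3])
    · rfl
  have hsw : ∀ w ∈ Φ ⁻¹' mstEvent ⊤ (star' z x y), w ∈ mstEvent ⊤ (star z) ∧
      wext w s(z, y) < wext w s(x, u) := by
    intro w hw
    obtain ⟨c1, c2, c3, c4⟩ := star'_cond hxy hxz hyz hw
    have hzy : wext w s(z, y) = wext (Φ w) s(z, y) :=
      hw3 w _ (by rw [ne_eq, Sym2.eq_iff]; grind) (by rw [ne_eq, Sym2.eq_iff]; grind)
    have hxv : ∀ v, v ≠ y → v ≠ z → wext w s(x, v) = wext (Φ w) s(x, v) := fun v _ _ =>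
      hw3 w _ (by rw [ne_eq, Sym2.eq_iff]; grind) (by rw [ne_eq, Sym2.eq_iff]; grind)
    have hab : ∀ a b, a ≠ x → b ≠ x → wext w s(a, b) = wext (Φ w) s(a, b) := fun a b _ _ =>
      hw3 w _ (by rw [ne_eq, Sym2.eq_iff]; grind) (by rw [ne_eq, Sym2.eq_iff]; grind)
    refine ⟨?_, ?_⟩
    · apply star_mst
      intro a b hne haz hbz
      by_cases hax : a = x
      · subst hax
        rw [Sym2.eq_swap (a := z), hw2 w]
        by_cases hby : b = y
        · rw [hby, hw1 w]
          exact c1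
        · rw [hxv b hby hbz]
          exact (c3 b hne.symm hby hbz).1
      by_cases hbx : b = x
      · subst hbx
        rw [Sym2.eq_swap (a := a) (b := b), hab z a hxz.symm hax]
        by_cases hay : a = y
        · subst hay
          rw [hw1]
          exact c2
        · rw [hxv a hay haz]
          exact (c3 a hax hay haz).2.1
      · rw [hab z a hxz.symm hax, hab a b hax hbx]
        exact c4 a b hne hax hbx haz hbz
    · rw [hzy, hxv u huy huz]
      exact (c3 u hux huy huz).2.2
  have hdisj : Disjoint (Φ ⁻¹' mstEvent ⊤ (star' z x y)) box := by
    rw [Set.disjoint_left]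
    intro w h1 h2
    exact lt_asymm (hsw w h1).2 (hbox2 w h2)
  have hsubset : Φ ⁻¹' mstEvent ⊤ (star' z x y) ∪ box ⊆ mstEvent ⊤ (star z) :=
    Set.union_subset (fun w hw => (hsw w hw).1) hbox1
  have hfin := measure_mono (μ := Measure.pi ν) hsubset
  rw [measure_union hdisj hboxm, hpre,
    hall _ _ (star_isSpanningTree z) (star'_isSpanningTree hxy hxz hyz)] at hfin
  have hlt := ENNReal.lt_add_right (measure_ne_top (Measure.pi ν) (mstEvent ⊤ (star' z x y)))
    hboxpos.ne'
  exact absurd hfin (not_le.mpr hlt)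

/-- Connected-support limitation (`n ≥ 4`): if `(X_e)` is a non-colliding product
measure on the edges of `K_n` in which each edge law has connected topological support,
and two distinct edges sharing an endpoint have identical laws, then the induced
minimum-spanning-tree distribution is not uniform. -/
theorem connected_support_not_uniform (n : ℕ) (hn : 4 ≤ n)
    (ν : (⊤ : SimpleGraph (Fin n)).edgeSet → Measure ℝ)
    (hprob : ∀ e, IsProbabilityMeasure (ν e))
    (hnc : ∀ e e' : (⊤ : SimpleGraph (Fin n)).edgeSet, e ≠ e' →
      Measure.pi ν {w | w e = w e'} = 0)
    (hconn : ∀ e, IsPreconnected (measSupport (ν e)))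
    (e e' : (⊤ : SimpleGraph (Fin n)).edgeSet) (hee : e ≠ e')
    (hshare : ∃ x : Fin n, x ∈ (e : Sym2 (Fin n)) ∧ x ∈ (e' : Sym2 (Fin n)))
    (hsame : ν e = ν e') :
    ∃ T T' : Finset (Sym2 (Fin n)),
      IsSpanningTree (⊤ : SimpleGraph (Fin n)) T ∧
      IsSpanningTree (⊤ : SimpleGraph (Fin n)) T' ∧
      (Measure.pi ν (mstEvent (⊤ : SimpleGraph (Fin n)) T)).toReal ≠
        (Measure.pi ν (mstEvent (⊤ : SimpleGraph (Fin n)) T')).toReal := by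
  obtain ⟨x, hx, hx'⟩ := hshare
  obtain ⟨y, hy⟩ := Sym2.mem_iff_exists.mp hx
  obtain ⟨z, hz⟩ := Sym2.mem_iff_exists.mp hx'
  have hxy : x ≠ y := by
    have := e.2
    rw [hy] at this
    simpa using this
  have hxz : x ≠ z := by
    have := e'.2
    rw [hz] at this
    simpa using this
  have hyz : y ≠ z := by
    intro h
    apply hee
    apply Subtype.ext
    rw [hy, hz, h]
  have hu : ∃ u : Fin n, u ≠ x ∧ u ≠ y ∧ u ≠ z := by
    by_contra hno
    push Not at hno
    have h1 : (Finset.univ : Finset (Fin n)) ⊆ {x, y, z} := by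
      intro u _
      simp only [Finset.mem_insert, Finset.mem_singleton]
      by_contra hh
      push Not at hh
      exact hh.2.2 (hno u hh.1 hh.2.1)
    have h2 := Finset.card_le_card h1
    have h3 : ({x, y, z} : Finset (Fin n)).card ≤ 3 := Finset.card_le_three
    rw [Finset.card_univ, Fintype.card_fin] at h2
    omega
  obtain ⟨u, hux, huy, huz⟩ := hu
  have key := main_aux (V := Fin n) ν hprob (by convert hnc) hconn e e' x y z u hy hz hxy hxz hyz
    hux huy huz hsame
  convert key


end RST
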